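/- arXiv:2401.17516 — 2 statements merged into one kernel-verified Lean document; each statement's English description precedes it below -/
import Mathlib

section
/- Let C be an abelian category with enough projectives and injectives and X ⊆ C an (n+2)-rigid preenveloping subcategory with Inj(C) ⊆ ^{⊥_{≤ n+1}}X. Then Inj(C) ⊆ ^{⊥_{≤ n+1}}X holds if and only if the injective objects of the exact category ^{⊥_{≤ n+1}}X are exactly add(X ∪ Inj(C)). -/
open CategoryTheory CategoryTheory.Limits CategoryTheory.Abelian

universe w v u

variable {C : Type u} [Category.{v} C] [Abelian C] [HasExt.{w} C]

/-- The right orthogonal `X^{⊥_{≤ m}}`: objects `N` with `Ext^i(A, N) = 0` for all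
`A ∈ X` and `1 ≤ i ≤ m`. -/
def rightPerpLE (X : Set C) (m : ℕ) : Set C :=
  {N | ∀ A ∈ X, ∀ i : ℕ, 1 ≤ i → i ≤ m → Subsingleton (Abelian.Ext A N i)}

/-- The left orthogonal `^{⊥_{≤ m}}X`. -/
def leftPerpLE (X : Set C) (m : ℕ) : Set C :=
  {M | ∀ A ∈ X, ∀ i : ℕ, 1 ≤ i → i ≤ m → Subsingleton (Abelian.Ext M A i)}

/-- `X` is `m+1`-rigid: `Ext^i(X, X') = 0` for all `X, X' ∈ X`, `1 ≤ i ≤ m`. -/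
def IsRigidLE (X : Set C) (m : ℕ) : Prop :=
  ∀ A ∈ X, ∀ B ∈ X, ∀ i : ℕ, 1 ≤ i → i ≤ m → Subsingleton (Abelian.Ext A B i)

/-- `g : A ⟶ M` is a right `X`-approximation (an `X`-precover) of `M`. -/
def IsPrecover (X : Set C) {A M : C} (g : A ⟶ M) : Prop :=
  A ∈ X ∧ ∀ A' ∈ X, ∀ h : A' ⟶ M, ∃ t : A' ⟶ A, t ≫ g = h

/-- `f : M ⟶ A` is a left `X`-approximation (an `X`-preenvelope) of `M`. -/
def IsPreenvelope (X : Set C) {A M : C} (f : M ⟶ A) : Prop :=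
  A ∈ X ∧ ∀ A' ∈ X, ∀ h : M ⟶ A', ∃ t : A ⟶ A', f ≫ t = h

/-- `X` is precovering in the full subcategory `D`. -/
def IsPrecoveringIn (D X : Set C) : Prop :=
  ∀ M ∈ D, ∃ (A : C) (g : A ⟶ M), IsPrecover X g

/-- `X` is preenveloping in the full subcategory `D`. -/
def IsPreenvelopingIn (D X : Set C) : Prop :=
  ∀ M ∈ D, ∃ (A : C) (f : M ⟶ A), IsPreenvelope X f

/-- `addClosure S` is the closure of `S` under finite direct sums and direct summands. -/
inductive addClosure (S : Set C) : C → Prop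
  | of {A : C} (h : A ∈ S) : addClosure S A
  | zero (O : C) (h : IsZero O) : addClosure S O
  | biprod {A B : C} : addClosure S A → addClosure S B → addClosure S (A ⊞ B)
  | retract {A B : C} (i : A ⟶ B) (r : B ⟶ A) (hir : i ≫ r = 𝟙 A) :
      addClosure S B → addClosure S A

/-- The class of projective objects of `C`, as a set. -/
def projSet : Set C := {P | Projective P}

/-- The class of injective objects of `C`, as a set. -/
def injSet : Set C := {I | Injective I}

/-- The projective objects of an extension-closed subcategory `R` (with the exact structure
inherited from `C`): objects `P ∈ R` with `Ext^1(P, N) = 0` (computed in `C`) for all `N ∈ R`. -/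
def projIn (R : Set C) : Set C :=
  {P | P ∈ R ∧ ∀ N ∈ R, Subsingleton (Abelian.Ext P N 1)}

/-- The injective objects of an extension-closed subcategory `R`. -/
def injIn (R : Set C) : Set C :=
  {I | I ∈ R ∧ ∀ N ∈ R, Subsingleton (Abelian.Ext N I 1)}

/-!
Each `Ext` functor is additive, so its vanishing passes from `S` to `add S`; this reduces the
inclusion `add(X ∪ Inj C) ⊆ injIn (^⊥X)` to `X` and `Inj C`. Conversely, pair an `X`-preenvelope
`M ⟶ A` with an embedding `M ⟶ J` into an injective to get a monomorphism `M ⟶ A ⊞ J` through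
which every morphism from `M` to an object of `X` still factors. By the long exact sequence its
cokernel lies in `^⊥X`, so the monomorphism splits as soon as `M` is an injective object of `^⊥X`.
-/

section AddClosure

variable {S : Set C} {M : C}

omit [HasExt.{w} C] in
lemma addClosure.isZero_obj {D : Type*} [Category* D] [Preadditive D] (F : C ⥤ D) [F.Additive]
    (hM : addClosure S M) (hS : ∀ A ∈ S, IsZero (F.obj A)) : IsZero (F.obj M) := by
  induction hM with
  | of hA => exact hS _ hA
  | zero O hO => exact F.map_isZero hO
  | @biprod A B _ _ hA hB =>
    rw [IsZero.iff_id_eq_zero, ← F.map_id, ← biprod.total, F.map_add, F.map_comp, F.map_comp,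
      hA.eq_of_src (F.map biprod.inl) 0, hB.eq_of_src (F.map biprod.inr) 0, comp_zero, comp_zero,
      add_zero]
  | retract i r hir _ hB =>
    rw [IsZero.iff_id_eq_zero, ← F.map_id, ← hir, F.map_comp, hB.eq_of_src (F.map r) 0, comp_zero]

lemma addClosure.subsingleton_ext_left (hM : addClosure S M) {Y : C} {k : ℕ}
    (hS : ∀ A ∈ S, Subsingleton (Ext A Y k)) : Subsingleton (Ext M Y k) :=
  AddCommGrpCat.subsingleton_of_isZero
    (hM.isZero_obj (extFunctor k ⋙ (evaluation C AddCommGrpCat).obj Y).rightOp fun A hA =>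
      have := hS A hA
      (AddCommGrpCat.isZero_of_subsingleton (.of (Ext A Y k))).op).unop

lemma addClosure.subsingleton_ext_right (hM : addClosure S M) {Y : C} {k : ℕ}
    (hS : ∀ A ∈ S, Subsingleton (Ext Y A k)) : Subsingleton (Ext Y M k) :=
  AddCommGrpCat.subsingleton_of_isZero
    (hM.isZero_obj (extFunctorObj Y k) fun A hA =>
      have := hS A hA
      AddCommGrpCat.isZero_of_subsingleton (.of (Ext Y A k)))

lemma addClosure.mem_leftPerpLE (hM : addClosure S M) {X : Set C} {m : ℕ}
    (hS : S ⊆ leftPerpLE X m) : M ∈ leftPerpLE X m :=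
  fun B hB i hi him => hM.subsingleton_ext_left fun _ hA => hS hA B hB i hi him

lemma addClosure.mem_injIn (hM : addClosure S M) {R : Set C} (hMR : M ∈ R) (hS : S ⊆ injIn R) :
    M ∈ injIn R :=
  ⟨hMR, fun N hN => hM.subsingleton_ext_right fun _ hA => (hS hA).2 N hN⟩

end AddClosure

section ShortExact

variable {S : ShortComplex C} (hS : S.ShortExact) {Y : C}

include hS

lemma exists_extension_of_subsingleton_ext_one (h₃ : Subsingleton (Ext S.X₃ Y 1))
    (φ : S.X₁ ⟶ Y) : ∃ ψ : S.X₂ ⟶ Y, S.f ≫ ψ = φ := by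
  obtain ⟨y, hy⟩ := Ext.contravariant_sequence_exact₁ hS Y (Ext.mk₀ φ) (add_zero 1)
    (h₃.elim _ _)
  obtain ⟨ψ, rfl⟩ := (Ext.mk₀_bijective _ _).surjective y
  rw [Ext.mk₀_comp_mk₀] at hy
  exact ⟨ψ, (Ext.mk₀_bijective _ _).injective hy⟩

lemma subsingleton_ext_one_of_exists_extension (h₂ : Subsingleton (Ext S.X₂ Y 1))
    (hext : ∀ φ : S.X₁ ⟶ Y, ∃ ψ : S.X₂ ⟶ Y, S.f ≫ ψ = φ) : Subsingleton (Ext S.X₃ Y 1) := by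
  refine subsingleton_of_forall_eq 0 fun x => ?_
  obtain ⟨y, rfl⟩ := Ext.contravariant_sequence_exact₃ hS Y x (h₂.elim _ _) (add_zero 1)
  obtain ⟨φ, rfl⟩ := (Ext.mk₀_bijective _ _).surjective y
  obtain ⟨ψ, rfl⟩ := hext φ
  rw [← Ext.mk₀_comp_mk₀, hS.extClass_comp_assoc]

lemma subsingleton_ext_succ_X₃ {k : ℕ} (h₁ : Subsingleton (Ext S.X₁ Y k))
    (h₂ : Subsingleton (Ext S.X₂ Y (k + 1))) : Subsingleton (Ext S.X₃ Y (k + 1)) := by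
  refine subsingleton_of_forall_eq 0 fun x => ?_
  obtain ⟨y, rfl⟩ := Ext.contravariant_sequence_exact₃ hS Y x (h₂.elim _ _) (add_comm 1 k)
  rw [h₁.elim y 0, Ext.comp_zero]

lemma X₃_mem_leftPerpLE_succ {X : Set C} {m : ℕ} (h₁ : S.X₁ ∈ leftPerpLE X m)
    (h₂ : S.X₂ ∈ leftPerpLE X (m + 1))
    (hext : ∀ B ∈ X, ∀ φ : S.X₁ ⟶ B, ∃ ψ : S.X₂ ⟶ B, S.f ≫ ψ = φ) :
    S.X₃ ∈ leftPerpLE X (m + 1) := by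
  intro B hB i hi him
  obtain ⟨k, rfl⟩ := Nat.exists_eq_add_of_le' hi
  obtain rfl | hk := k.eq_zero_or_pos
  · exact subsingleton_ext_one_of_exists_extension hS (h₂ B hB 1 hi him) (hext B hB)
  · exact subsingleton_ext_succ_X₃ hS (h₁ B hB k hk (by lia)) (h₂ B hB (k + 1) hi him)

end ShortExact

omit [HasExt.{w} C] in
lemma IsPreenvelope.exists_biprod_lift_comp_eq {X : Set C} {M A J B : C} {f : M ⟶ A}
    (hf : IsPreenvelope X f) (g : M ⟶ J) (hB : B ∈ X) (φ : M ⟶ B) :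
    ∃ ψ : A ⊞ J ⟶ B, biprod.lift f g ≫ ψ = φ := by
  obtain ⟨t, ht⟩ := hf.2 B hB φ
  exact ⟨biprod.fst ≫ t, by rw [biprod.lift_fst_assoc, ht]⟩

lemma leftPerpLE_antitone (X : Set C) : Antitone (leftPerpLE X) :=
  fun _ _ hmk _ hM A hA i hi him => hM A hA i hi (him.trans hmk)

lemma isRigidLE_iff_subset_leftPerpLE {X : Set C} {m : ℕ} :
    IsRigidLE X m ↔ X ⊆ leftPerpLE X m :=
  Iff.rfl

lemma union_injSet_subset_injIn_leftPerpLE {X : Set C} {m : ℕ} (hm : 1 ≤ m)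
    (hX : X ∪ injSet ⊆ leftPerpLE X m) : X ∪ injSet ⊆ injIn (leftPerpLE X m) := by
  refine fun A hA => ⟨hX hA, fun N hN => ?_⟩
  obtain hA | (hA : Injective A) := hA
  · exact hN A hA 1 le_rfl hm
  · exact Ext.subsingleton_of_injective N A 0

lemma addClosure_of_mem_injIn_leftPerpLE [EnoughInjectives C] {X : Set C} {m : ℕ}
    (hpreenv : IsPreenvelopingIn (leftPerpLE X (m + 1)) X)
    (hX : X ∪ injSet ⊆ leftPerpLE X (m + 1)) {M : C} (hM : M ∈ injIn (leftPerpLE X (m + 1))) :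
    addClosure (X ∪ injSet) M := by
  obtain ⟨hMperp, hMinj⟩ := hM
  obtain ⟨A, f, hf⟩ := hpreenv M hMperp
  let J := Injective.under M
  let g : M ⟶ A ⊞ J := biprod.lift f (Injective.ι M)
  have hg : Mono g := mono_of_mono_fac (biprod.lift_snd f (Injective.ι M))
  have hS : (ShortComplex.mk g (cokernel.π g) (cokernel.condition g)).ShortExact :=
    { exact := ShortComplex.exact_cokernel g }
  have hAJ : addClosure (X ∪ injSet) (A ⊞ J) :=
    .biprod (.of (.inl hf.1)) (.of (.inr (Injective.injective_under M)))
  have hcoker : cokernel g ∈ leftPerpLE X (m + 1) :=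
    X₃_mem_leftPerpLE_succ hS (leftPerpLE_antitone X m.le_succ hMperp)
      (hAJ.mem_leftPerpLE hX)
      fun _ hB => hf.exists_biprod_lift_comp_eq (Injective.ι M) hB
  obtain ⟨r, hr⟩ := exists_extension_of_subsingleton_ext_one hS (hMinj _ hcoker) (𝟙 M)
  exact .retract g r hr hAJ

theorem stmt9_general [EnoughInjectives C] (X : Set C) (n : ℕ)
    (hpreenv : IsPreenvelopingIn (leftPerpLE X (n + 1)) X) :
    (IsRigidLE X (n + 1) ∧ injSet ⊆ leftPerpLE X (n + 1)) ↔
      injIn (leftPerpLE X (n + 1)) = {M | addClosure (X ∪ injSet) M} := by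
  rw [isRigidLE_iff_subset_leftPerpLE, ← Set.union_subset_iff]
  constructor
  · intro hX
    ext M
    exact ⟨addClosure_of_mem_injIn_leftPerpLE hpreenv hX, fun hM =>
      hM.mem_injIn (hM.mem_leftPerpLE hX)
        (union_injSet_subset_injIn_leftPerpLE (Nat.le_add_left 1 n) hX)⟩
  · intro h A hA
    have hAinj : A ∈ injIn (leftPerpLE X (n + 1)) := h ▸ addClosure.of hA
    exact hAinj.1

/-- Proposition 2.12: for an `(n+2)`-rigid preenveloping subcategory `X` of `C` with
`Inj(C) ⊆ ^{⊥_{≤ n+1}}X`, the condition `Inj(C) ⊆ ^{⊥_{≤ n+1}}X` holds if and only if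
the injective objects of the exact category `^{⊥_{≤ n+1}}X` are exactly `add(X ∪ Inj C)`. -/
theorem stmt9 [EnoughProjectives C] [EnoughInjectives C] (X : Set C) (n : ℕ)
    (hrigid : IsRigidLE X (n + 1))
    (hpreenv : IsPreenvelopingIn (Set.univ : Set C) X)
    (hinj : injSet ⊆ leftPerpLE X (n + 1)) :
    injSet ⊆ leftPerpLE X (n + 1) ↔
      injIn (leftPerpLE X (n + 1)) = setOf (addClosure (X ∪ injSet)) := by
  have hpreenv' : IsPreenvelopingIn (leftPerpLE X (n + 1)) X :=
    fun M _ => hpreenv M (Set.mem_univ M)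
  exact (and_iff_right hrigid).symm.trans (stmt9_general X n hpreenv')
end

section
/- Let C be an abelian category with enough projectives and injectives and X ⊆ C an (n+2)-rigid functorially finite subcategory with X^{⊥_{≤ n+1}} = ^{⊥_{≤ n+1}}X. If additionally X^{⊥_1} = ^{⊥_1}X, then X^{⊥_1} = X^{⊥_{≤ n+1}} = ^{⊥_1}X = ^{⊥_{≤ n+1}}X. -/
open CategoryTheory CategoryTheory.Limits CategoryTheory.Abelian

universe w v u

variable {C : Type u} [Category.{v} C] [Abelian C] [HasExt.{w} C]

/-
Every object `N` embeds into some `E = I ⊞ A` with `I` injective and `A ∈ X`, by pairing a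
monomorphism `N ⟶ I` with an `X`-preenvelope `N ⟶ A`. Every morphism from `N` to an object of `X`
extends to `E`, so `Ext¹(E/N, X) = 0` by Wakamatsu's argument, and the symmetry `X^{⊥_1} = ^{⊥_1}X`
turns this into `Ext¹(X, E/N) = 0`. As `Ext^i(X, E) = 0` for `1 ≤ i ≤ n + 1`, dimension shifting
makes `Ext^{i+1}(X, N)` a quotient of `Ext^i(X, E/N)` for `1 ≤ i ≤ n`, so induction on `i` applies.
Precovers and projectives give the dual statement for `^{⊥_1}X`.
-/

variable {X : Set C} {m k : ℕ}

lemma rightPerpLE_anti (X : Set C) (hmk : m ≤ k) : rightPerpLE X k ⊆ rightPerpLE X m :=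
  fun _ hN A hA i hi him => hN A hA i hi (him.trans hmk)

lemma leftPerpLE_anti (X : Set C) (hmk : m ≤ k) : leftPerpLE X k ⊆ leftPerpLE X m :=
  fun _ hM A hA i hi him => hM A hA i hi (him.trans hmk)

lemma IsRigidLE.mono (hX : IsRigidLE X k) (hmk : m ≤ k) : IsRigidLE X m :=
  fun A hA B hB i hi him => hX A hA B hB i hi (him.trans hmk)

lemma IsRigidLE.subset_rightPerpLE (hX : IsRigidLE X m) : X ⊆ rightPerpLE X m :=
  fun B hB A hA => hX A hA B hB

lemma IsRigidLE.subset_leftPerpLE (hX : IsRigidLE X m) : X ⊆ leftPerpLE X m :=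
  hX

lemma injSet_subset_rightPerpLE (X : Set C) (m : ℕ) : injSet ⊆ rightPerpLE X m := by
  intro I (hI : Injective I) A _ i hi _
  obtain ⟨j, rfl⟩ := Nat.exists_eq_add_of_le' hi
  exact Ext.subsingleton_of_injective A I j

lemma projSet_subset_leftPerpLE (X : Set C) (m : ℕ) : projSet ⊆ leftPerpLE X m := by
  intro P (hP : Projective P) A _ i hi _
  obtain ⟨j, rfl⟩ := Nat.exists_eq_add_of_le' hi
  exact Ext.subsingleton_of_projective P A j

lemma biprod_mem_rightPerpLE {N N' : C} (hN : N ∈ rightPerpLE X m)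
    (hN' : N' ∈ rightPerpLE X m) : (N ⊞ N') ∈ rightPerpLE X m := by
  intro A hA i hi him
  have := hN A hA i hi him
  have := hN' A hA i hi him
  exact Ext.addEquivBiprod.toEquiv.subsingleton

lemma biprod_mem_leftPerpLE {M M' : C} (hM : M ∈ leftPerpLE X m)
    (hM' : M' ∈ leftPerpLE X m) : (M ⊞ M') ∈ leftPerpLE X m := by
  intro A hA i hi him
  have := hM A hA i hi him
  have := hM' A hA i hi him
  exact Ext.biprodAddEquiv.toEquiv.subsingleton

section ShortExact

variable {S : ShortComplex C}

lemma subsingleton_ext_one_of_forall_extends (hS : S.ShortExact) {Y : C}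
    [Subsingleton (Ext S.X₂ Y 1)] (hext : ∀ h : S.X₁ ⟶ Y, ∃ t : S.X₂ ⟶ Y, S.f ≫ t = h) :
    Subsingleton (Ext S.X₃ Y 1) := by
  refine subsingleton_of_forall_eq 0 fun x => ?_
  obtain ⟨y, rfl⟩ := Ext.contravariant_sequence_exact₃ hS Y x (Subsingleton.elim _ _) (add_zero 1)
  obtain ⟨h, rfl⟩ := Ext.homEquiv₀.symm.surjective y
  obtain ⟨t, rfl⟩ := hext h
  calc hS.extClass.comp (Ext.mk₀ (S.f ≫ t)) (add_zero 1)
      = hS.extClass.comp ((Ext.mk₀ S.f).comp (Ext.mk₀ t) (zero_add 0)) (add_zero 1) := by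
        rw [Ext.mk₀_comp_mk₀]
    _ = 0 := hS.extClass_comp_assoc _

lemma subsingleton_ext_one_of_forall_lifts (hS : S.ShortExact) {Y : C}
    [Subsingleton (Ext Y S.X₂ 1)] (hlift : ∀ h : Y ⟶ S.X₃, ∃ t : Y ⟶ S.X₂, t ≫ S.g = h) :
    Subsingleton (Ext Y S.X₁ 1) := by
  refine subsingleton_of_forall_eq 0 fun x => ?_
  obtain ⟨y, rfl⟩ := Ext.covariant_sequence_exact₁ Y hS x (Subsingleton.elim _ _) (zero_add 1)
  obtain ⟨h, rfl⟩ := Ext.homEquiv₀.symm.surjective y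
  obtain ⟨t, rfl⟩ := hlift h
  calc (Ext.mk₀ (t ≫ S.g)).comp hS.extClass (zero_add 1)
      = (Ext.mk₀ t).comp ((Ext.mk₀ S.g).comp hS.extClass (zero_add 1)) (zero_add 1) := by
        rw [Ext.mk₀_comp_mk₀_assoc]
    _ = 0 := by rw [hS.comp_extClass, Ext.comp_zero]

lemma mem_rightPerpLE_succ_of_shortExact (hS : S.ShortExact) (h₁ : S.X₁ ∈ rightPerpLE X 1)
    (h₂ : S.X₂ ∈ rightPerpLE X (m + 1)) (h₃ : S.X₃ ∈ rightPerpLE X m) :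
    S.X₁ ∈ rightPerpLE X (m + 1) := by
  intro A hA i hi him
  obtain ⟨j, rfl⟩ := Nat.exists_eq_add_of_le' hi
  obtain rfl | hj := j.eq_zero_or_pos
  · exact h₁ A hA 1 le_rfl le_rfl
  · have := h₂ A hA (j + 1) hi him
    have := h₃ A hA j hj (Nat.le_of_succ_le_succ him)
    refine subsingleton_of_forall_eq 0 fun x => ?_
    obtain ⟨y, rfl⟩ := Ext.covariant_sequence_exact₁ A hS x (Subsingleton.elim _ _) rfl
    rw [Subsingleton.elim y 0, Ext.zero_comp]

lemma mem_leftPerpLE_succ_of_shortExact (hS : S.ShortExact) (h₁ : S.X₁ ∈ leftPerpLE X m)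
    (h₂ : S.X₂ ∈ leftPerpLE X (m + 1)) (h₃ : S.X₃ ∈ leftPerpLE X 1) :
    S.X₃ ∈ leftPerpLE X (m + 1) := by
  intro A hA i hi him
  obtain ⟨j, rfl⟩ := Nat.exists_eq_add_of_le' hi
  obtain rfl | hj := j.eq_zero_or_pos
  · exact h₃ A hA 1 le_rfl le_rfl
  · have := h₂ A hA (j + 1) hi him
    have := h₁ A hA j hj (Nat.le_of_succ_le_succ him)
    refine subsingleton_of_forall_eq 0 fun x => ?_
    obtain ⟨y, rfl⟩ := Ext.contravariant_sequence_exact₃ hS A x (Subsingleton.elim _ _)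
      (add_comm 1 j)
    rw [Subsingleton.elim y 0, Ext.comp_zero]

end ShortExact

lemma exists_mono_cokernel_mem_leftPerpLE [EnoughInjectives C] (hrigid : IsRigidLE X (m + 1))
    (hpreenv : IsPreenvelopingIn Set.univ X) (hinj : injSet ⊆ leftPerpLE X 1) (N : C) :
    ∃ (E : C) (f : N ⟶ E), Mono f ∧ E ∈ rightPerpLE X (m + 1) ∧ cokernel f ∈ leftPerpLE X 1 := by
  obtain ⟨A, f, hA, hf⟩ := hpreenv N trivial
  have hI : Injective.under N ∈ injSet := Injective.injective_under N
  let g : N ⟶ Injective.under N ⊞ A := biprod.lift (Injective.ι N) f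
  have hS : (ShortComplex.mk g (cokernel.π g) (cokernel.condition g)).ShortExact :=
    ⟨ShortComplex.exact_cokernel g⟩
  have hE : (Injective.under N ⊞ A) ∈ leftPerpLE X 1 :=
    biprod_mem_leftPerpLE (hinj hI) ((hrigid.mono (by lia)).subset_leftPerpLE hA)
  refine ⟨_, g, hS.mono_f, biprod_mem_rightPerpLE (injSet_subset_rightPerpLE X _ hI)
    (hrigid.subset_rightPerpLE hA), fun B hB i hi hi' => ?_⟩
  obtain rfl : i = 1 := le_antisymm hi' hi
  have := hE B hB 1 le_rfl le_rfl
  refine subsingleton_ext_one_of_forall_extends hS fun h => ?_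
  obtain ⟨t, rfl⟩ := hf B hB h
  exact ⟨biprod.snd ≫ t, biprod.lift_snd_assoc _ _ _⟩

lemma exists_epi_kernel_mem_rightPerpLE [EnoughProjectives C] (hrigid : IsRigidLE X (m + 1))
    (hprec : IsPrecoveringIn Set.univ X) (hproj : projSet ⊆ rightPerpLE X 1) (M : C) :
    ∃ (E : C) (g : E ⟶ M), Epi g ∧ E ∈ leftPerpLE X (m + 1) ∧ kernel g ∈ rightPerpLE X 1 := by
  obtain ⟨A, g, hA, hg⟩ := hprec M trivial
  have hP : Projective.over M ∈ projSet := Projective.projective_over M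
  let p : Projective.over M ⊞ A ⟶ M := biprod.desc (Projective.π M) g
  have hS : (ShortComplex.mk (kernel.ι p) p (kernel.condition p)).ShortExact :=
    ⟨ShortComplex.exact_kernel p⟩
  have hE : (Projective.over M ⊞ A) ∈ rightPerpLE X 1 :=
    biprod_mem_rightPerpLE (hproj hP) ((hrigid.mono (by lia)).subset_rightPerpLE hA)
  refine ⟨_, p, hS.epi_g, biprod_mem_leftPerpLE (projSet_subset_leftPerpLE X _ hP)
    (hrigid.subset_leftPerpLE hA), fun B hB i hi hi' => ?_⟩
  obtain rfl : i = 1 := le_antisymm hi' hi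
  have := hE B hB 1 le_rfl le_rfl
  refine subsingleton_ext_one_of_forall_lifts hS fun h => ?_
  obtain ⟨t, rfl⟩ := hg B hB h
  exact ⟨t ≫ biprod.inr, by simp only [p, Category.assoc, biprod.inr_desc]⟩

theorem rightPerpLE_one_subset [EnoughInjectives C] (hrigid : IsRigidLE X m)
    (hpreenv : IsPreenvelopingIn Set.univ X) (hinj : injSet ⊆ leftPerpLE X 1)
    (h : leftPerpLE X 1 ⊆ rightPerpLE X 1) : rightPerpLE X 1 ⊆ rightPerpLE X m := by
  induction m with
  | zero => exact rightPerpLE_anti X zero_le_one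
  | succ m ih =>
    intro N hN
    obtain ⟨E, f, hf, hE, hcoker⟩ := exists_mono_cokernel_mem_leftPerpLE hrigid hpreenv hinj N
    have hS : (ShortComplex.mk f (cokernel.π f) (cokernel.condition f)).ShortExact :=
      ⟨ShortComplex.exact_cokernel f⟩
    exact mem_rightPerpLE_succ_of_shortExact hS hN hE (ih (hrigid.mono m.le_succ) (h hcoker))

theorem leftPerpLE_one_subset [EnoughProjectives C] (hrigid : IsRigidLE X m)
    (hprec : IsPrecoveringIn Set.univ X) (hproj : projSet ⊆ rightPerpLE X 1)
    (h : rightPerpLE X 1 ⊆ leftPerpLE X 1) : leftPerpLE X 1 ⊆ leftPerpLE X m := by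
  induction m with
  | zero => exact leftPerpLE_anti X zero_le_one
  | succ m ih =>
    intro M hM
    obtain ⟨E, g, hg, hE, hker⟩ := exists_epi_kernel_mem_rightPerpLE hrigid hprec hproj M
    have hS : (ShortComplex.mk (kernel.ι g) g (kernel.condition g)).ShortExact :=
      ⟨ShortComplex.exact_kernel g⟩
    exact mem_leftPerpLE_succ_of_shortExact hS (ih (hrigid.mono m.le_succ) (h hker)) hE hM

theorem stmt11_general [EnoughProjectives C] [EnoughInjectives C] (X : Set C) (n : ℕ)
    (hrigid : IsRigidLE X (n + 1))
    (hprec : IsPrecoveringIn (Set.univ : Set C) X)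
    (hpreenv : IsPreenvelopingIn (Set.univ : Set C) X)
    (h1 : rightPerpLE X 1 = leftPerpLE X 1) :
    rightPerpLE X 1 = rightPerpLE X (n + 1) ∧
    rightPerpLE X 1 = leftPerpLE X 1 ∧
    leftPerpLE X 1 = leftPerpLE X (n + 1) := by
  have hinj : injSet ⊆ leftPerpLE X 1 := h1 ▸ injSet_subset_rightPerpLE X 1
  have hproj : projSet ⊆ rightPerpLE X 1 := h1 ▸ projSet_subset_leftPerpLE X 1
  have hn : 1 ≤ n + 1 := n.succ_pos
  exact ⟨(rightPerpLE_one_subset hrigid hpreenv hinj h1.ge).antisymm (rightPerpLE_anti X hn), h1,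
    (leftPerpLE_one_subset hrigid hprec hproj h1.le).antisymm (leftPerpLE_anti X hn)⟩

/-- Lemma 3.6: under the standing hypotheses, if moreover `X^{⊥_1} = ^{⊥_1}X`, then
`X^{⊥_1} = X^{⊥_{≤ n+1}} = ^{⊥_1}X = ^{⊥_{≤ n+1}}X`. -/
theorem stmt11 [EnoughProjectives C] [EnoughInjectives C] (X : Set C) (n : ℕ)
    (hrigid : IsRigidLE X (n + 1))
    (hprec : IsPrecoveringIn (Set.univ : Set C) X)
    (hpreenv : IsPreenvelopingIn (Set.univ : Set C) X)
    (heq : rightPerpLE X (n + 1) = leftPerpLE X (n + 1))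
    (h1 : rightPerpLE X 1 = leftPerpLE X 1) :
    rightPerpLE X 1 = rightPerpLE X (n + 1) ∧
    rightPerpLE X 1 = leftPerpLE X 1 ∧
    leftPerpLE X 1 = leftPerpLE X (n + 1) :=
  stmt11_general X n hrigid hprec hpreenv h1
end
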